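/- Let (X, ‖·‖) be a uniformly convex Banach space with modulus of convexity δ_X, let r > 0, and let S ⊆ X be an r-convex set, i.e. S = ⋂_{x ∈ M} B(x, r) ≠ ∅ for some M ⊆ X with M ≠ X. Then S is uniformly convex and its modulus of convexity satisfies δ_S(ε) ≥ r · δ_X(ε/r) for every ε ∈ (0, diam S). -/

import Mathlib

open Metric Set
open scoped NNReal ENNReal

/-- The modulus of convexity of a set `S` in a real normed space:
`δ_S(ε) = sup{δ ≥ 0 : B((x₁+x₂)/2, δ) ⊆ S for all x₁, x₂ ∈ S with ‖x₁ − x₂‖ = ε}`. -/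
noncomputable def setModulus {X : Type*} [NormedAddCommGroup X] [NormedSpace ℝ X]
    (S : Set X) (ε : ℝ) : ℝ :=
  sSup {δ : ℝ | 0 ≤ δ ∧ ∀ x₁ ∈ S, ∀ x₂ ∈ S, ‖x₁ - x₂‖ = ε →
    closedBall (midpoint ℝ x₁ x₂) δ ⊆ S}

/-- The exact bound of Lipschitz continuity of `h` on `U`:
the infimum of all Lipschitz constants of `h` on `U`. -/
noncomputable def lipOn {α β : Type*} [PseudoMetricSpace α] [PseudoMetricSpace β]
    (h : α → β) (U : Set α) : ℝ :=
  sInf {ℓ : ℝ | 0 ≤ ℓ ∧ ∀ x₁ ∈ U, ∀ x₂ ∈ U, dist (h x₁) (h x₂) ≤ ℓ * dist x₁ x₂}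

/-- The exact regularity bound of `f` around `x₀`: the infimum of all `κ ≥ 0` such that,
for some `δ > 0`, `dist(x, f⁻¹(y)) ≤ κ‖y − f(x)‖` for all `x ∈ B(x₀, δ)`, `y ∈ B(f(x₀), δ)`;
it equals `+∞` when `f` is not metrically regular around `x₀`. -/
noncomputable def regBound {X Y : Type*} [NormedAddCommGroup X] [NormedAddCommGroup Y]
    (f : X → Y) (x₀ : X) : ℝ≥0∞ :=
  sInf (ENNReal.ofReal '' {κ : ℝ | 0 ≤ κ ∧ ∃ δ > 0,
    ∀ x ∈ closedBall x₀ δ, ∀ y ∈ closedBall (f x₀) δ,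
      Metric.infDist x {x' | f x' = y} ≤ κ * ‖y - f x‖})

/-- `S ∈ U_c(X)`: `S` is a nonempty closed convex set whose modulus of convexity
satisfies `δ_S(ε) ≥ cε²` for all `ε ∈ (0, diam S)`. -/
def UniformlyConvexWith {X : Type*} [NormedAddCommGroup X] [NormedSpace ℝ X]
    (c : ℝ) (S : Set X) : Prop :=
  S.Nonempty ∧ IsClosed S ∧ Convex ℝ S ∧
    ∀ ε : ℝ, 0 < ε → ε < Metric.diam S → c * ε ^ 2 ≤ setModulus S ε

/-- The modulus of convexity of a normed space
`δ_X(ε) = inf{1 − ‖(x₁+x₂)/2‖ : x₁, x₂ ∈ B̄(0,1), ‖x₁ − x₂‖ = ε}`. -/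
noncomputable def spaceModulus (X : Type*) [NormedAddCommGroup X] [NormedSpace ℝ X]
    (ε : ℝ) : ℝ :=
  sInf {d : ℝ | ∃ x₁ ∈ closedBall (0 : X) 1, ∃ x₂ ∈ closedBall (0 : X) 1,
    ‖x₁ - x₂‖ = ε ∧ d = 1 - ‖midpoint ℝ x₁ x₂‖}

/-- `S` is `r`-convex (strongly convex of radius `r`): a nonempty intersection
`⋂_{x ∈ M} B̄(x, r)` for some `M ⊊ X`. -/
def RConvex {X : Type*} [NormedAddCommGroup X] (r : ℝ) (S : Set X) : Prop :=
  S.Nonempty ∧ ∃ M : Set X, M ≠ Set.univ ∧ S = ⋂ x ∈ M, closedBall x r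

/-- `f` is open at a linear rate around `x₀`. -/
def OpenAtLinearRate {X Y : Type*} [PseudoMetricSpace X] [PseudoMetricSpace Y]
    (f : X → Y) (x₀ : X) : Prop :=
  ∃ δ > (0 : ℝ), ∃ ζ > (0 : ℝ), ∃ σ > (0 : ℝ), ∀ x ∈ closedBall x₀ δ, ∀ r ∈ Icc (0 : ℝ) δ,
    closedBall (f x) (σ * r) ∩ closedBall (f x₀) ζ ⊆ f '' closedBall x r

/-!
For a centre `a` and radius `r`, the map `x ↦ r⁻¹ • (x - a)` turns the modulus of convexity of the
unit ball into that of `closedBall a r`: the midpoint of two points of this ball at distance `ε`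
lies at distance at least `r * δ_X(ε / r)` from its complement. That depth does not depend on `a`,
so it passes to intersections of balls of radius `r`.
-/

section

variable {X : Type*} [NormedAddCommGroup X] [NormedSpace ℝ X]

theorem norm_midpoint_le_one {u v : X} (hu : ‖u‖ ≤ 1) (hv : ‖v‖ ≤ 1) : ‖midpoint ℝ u v‖ ≤ 1 := by
  rw [← mem_closedBall_zero_iff] at hu hv ⊢
  exact (convex_closedBall 0 1).midpoint_mem hu hv

theorem spaceModulus_nonneg (ε : ℝ) : 0 ≤ spaceModulus X ε := by
  refine Real.sInf_nonneg ?_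
  rintro _ ⟨u, hu, v, hv, -, rfl⟩
  rw [mem_closedBall_zero_iff] at hu hv
  exact sub_nonneg.2 (norm_midpoint_le_one hu hv)

theorem norm_midpoint_le_one_sub_spaceModulus {u v : X} (hu : ‖u‖ ≤ 1) (hv : ‖v‖ ≤ 1) :
    ‖midpoint ℝ u v‖ ≤ 1 - spaceModulus X ‖u - v‖ := by
  refine le_sub_comm.1 (csInf_le ⟨0, ?_⟩
    ⟨u, mem_closedBall_zero_iff.2 hu, v, mem_closedBall_zero_iff.2 hv, rfl, rfl⟩)
  rintro _ ⟨u', hu', v', hv', -, rfl⟩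
  rw [mem_closedBall_zero_iff] at hu' hv'
  exact sub_nonneg.2 (norm_midpoint_le_one hu' hv')

theorem dist_midpoint_le_mul_one_sub_spaceModulus {r : ℝ} (hr : 0 < r) {a x y : X}
    (hx : x ∈ closedBall a r) (hy : y ∈ closedBall a r) :
    dist (midpoint ℝ x y) a ≤ r * (1 - spaceModulus X (‖x - y‖ / r)) := by
  have norm_rescale (z : X) : ‖r⁻¹ • z‖ = ‖z‖ / r := by
    rw [norm_smul_of_nonneg (inv_nonneg.2 hr.le), inv_mul_eq_div]
  have rescale_mem {z : X} (hz : z ∈ closedBall a r) : ‖r⁻¹ • (z - a)‖ ≤ 1 := by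
    rwa [norm_rescale, div_le_one hr, ← mem_closedBall_iff_norm]
  have rescale_midpoint :
      midpoint ℝ (r⁻¹ • (x - a)) (r⁻¹ • (y - a)) = r⁻¹ • (midpoint ℝ x y - a) := by
    simp only [midpoint_eq_smul_add, invOf_eq_inv]
    module
  have h := norm_midpoint_le_one_sub_spaceModulus (rescale_mem hx) (rescale_mem hy)
  rwa [rescale_midpoint, ← smul_sub, sub_sub_sub_cancel_right, norm_rescale, norm_rescale,
    div_le_iff₀' hr, ← dist_eq_norm] at h

theorem closedBall_midpoint_subset_closedBall {r : ℝ} (hr : 0 < r) {a x y : X}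
    (hx : x ∈ closedBall a r) (hy : y ∈ closedBall a r) :
    closedBall (midpoint ℝ x y) (r * spaceModulus X (‖x - y‖ / r)) ⊆ closedBall a r := by
  refine closedBall_subset_closedBall' ?_
  linarith [dist_midpoint_le_mul_one_sub_spaceModulus hr hx hy]

theorem exists_norm_sub_eq_of_lt_diam {S : Set X} (hS : Convex ℝ S) {ε : ℝ} (hε : 0 ≤ ε)
    (hd : ε < diam S) : ∃ x ∈ S, ∃ y ∈ S, ‖x - y‖ = ε := by
  obtain ⟨p, hp, q, hq, hpq⟩ : ∃ p ∈ S, ∃ q ∈ S, ε < dist p q := by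
    by_contra! hle
    exact hd.not_ge (diam_le_of_forall_dist_le hε hle)
  have hpq_pos : 0 < dist p q := hε.trans_lt hpq
  have ht : 0 ≤ ε / dist p q := by positivity
  refine ⟨AffineMap.lineMap p q (ε / dist p q),
    hS.lineMap_mem hp hq ⟨ht, (div_le_one hpq_pos).2 hpq.le⟩, p, hp, ?_⟩
  rw [← dist_eq_norm, dist_lineMap_left, Real.norm_of_nonneg ht, div_mul_cancel₀ _ hpq_pos.ne']

theorem le_setModulus {S : Set X} (hS : Convex ℝ S) {ε δ : ℝ} (hε : 0 < ε) (hd : ε < diam S)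
    (hδ : 0 ≤ δ)
    (hball : ∀ x ∈ S, ∀ y ∈ S, ‖x - y‖ = ε → closedBall (midpoint ℝ x y) δ ⊆ S) :
    δ ≤ setModulus S ε := by
  -- A chord of length `ε` bounds the admissible radii, so that `sSup` is not the junk value `0`.
  refine le_csSup ⟨diam S, ?_⟩ ⟨hδ, hball⟩
  rintro ρ ⟨hρ, hρball⟩
  obtain ⟨x, hx, y, hy, hxy⟩ := exists_norm_sub_eq_of_lt_diam hS hε.le hd
  have : Nontrivial X := ⟨x, y, sub_ne_zero.1 (norm_pos_iff.1 (hxy ▸ hε))⟩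
  have hbdd : Bornology.IsBounded S :=
    not_imp_comm.1 diam_eq_zero_of_unbounded (hε.trans hd).ne'
  calc ρ ≤ 2 * ρ := by linarith
    _ = diam (closedBall (midpoint ℝ x y) ρ) := (diam_closedBall_eq _ hρ).symm
    _ ≤ diam S := diam_mono (hρball x hx y hy hxy) hbdd

namespace RConvex

variable {r : ℝ} {S : Set X}

theorem convex (hS : RConvex r S) : Convex ℝ S := by
  obtain ⟨-, M, -, rfl⟩ := hS
  exact convex_iInter₂ fun a _ => convex_closedBall a r

theorem diam_le (hS : RConvex r S) (hr : 0 ≤ r) : diam S ≤ 2 * r := by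
  obtain ⟨-, M, -, rfl⟩ := hS
  obtain rfl | ⟨a, ha⟩ := M.eq_empty_or_nonempty
  · -- An empty family gives the whole space, whose `diam` is `0`: it is a point or unbounded.
    have diam_univ : diam (univ : Set X) = 0 := by
      obtain _ | _ := subsingleton_or_nontrivial X
      · exact diam_subsingleton subsingleton_univ
      · exact diam_eq_zero_of_unbounded (NormedSpace.unbounded_univ ℝ X)
    rw [biInter_empty, diam_univ]
    positivity
  · exact (diam_mono (biInter_subset_of_mem ha) isBounded_closedBall).trans (diam_closedBall hr)

theorem closedBall_midpoint_subset (hS : RConvex r S) (hr : 0 < r) {x y : X} (hx : x ∈ S)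
    (hy : y ∈ S) : closedBall (midpoint ℝ x y) (r * spaceModulus X (‖x - y‖ / r)) ⊆ S := by
  obtain ⟨-, M, -, rfl⟩ := hS
  exact subset_iInter₂ fun a ha => closedBall_midpoint_subset_closedBall hr
    (mem_iInter₂.1 hx a ha) (mem_iInter₂.1 hy a ha)

theorem mul_spaceModulus_le_setModulus (hS : RConvex r S) (hr : 0 < r) {ε : ℝ} (hε : 0 < ε)
    (hd : ε < diam S) : r * spaceModulus X (ε / r) ≤ setModulus S ε := by
  refine le_setModulus hS.convex hε hd (mul_nonneg hr.le (spaceModulus_nonneg _)) ?_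
  rintro x hx y hy rfl
  exact hS.closedBall_midpoint_subset hr hx hy

end RConvex

theorem strongly_convex_set_is_uniformly_convex_general {r : ℝ} (hr : 0 < r) {S : Set X}
    (hS : RConvex r S) :
    ((∀ ε : ℝ, 0 < ε → ε ≤ 2 → 0 < spaceModulus X ε) →
        ∀ ε : ℝ, 0 < ε → ε < diam S → 0 < setModulus S ε) ∧
      ∀ ε : ℝ, 0 < ε → ε < diam S → r * spaceModulus X (ε / r) ≤ setModulus S ε := by
  refine ⟨fun hX ε hε hd => ?_, fun ε hε hd => hS.mul_spaceModulus_le_setModulus hr hε hd⟩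
  have hε_le : ε / r ≤ 2 := (div_le_iff₀ hr).2 (hd.le.trans (hS.diam_le hr.le))
  calc 0 < r * spaceModulus X (ε / r) := mul_pos hr (hX _ (div_pos hε hr) hε_le)
    _ ≤ setModulus S ε := hS.mul_spaceModulus_le_setModulus hr hε hd

end

/-- Example 2.2 (ii) of the paper: in a uniformly convex Banach space, every
`r`-convex (strongly convex of radius `r`) set is uniformly convex, with
`δ_S(ε) ≥ r · δ_X(ε/r)` for all `ε ∈ (0, diam S)`. -/
theorem strongly_convex_set_is_uniformly_convex
    {X : Type*} [NormedAddCommGroup X] [NormedSpace ℝ X] [CompleteSpace X]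
    -- X is uniformly convex
    (hX : ∀ ε : ℝ, 0 < ε → ε ≤ 2 → 0 < spaceModulus X ε)
    (r : ℝ) (hr : 0 < r) (S : Set X) (hS : RConvex r S) :
    (∀ ε : ℝ, 0 < ε → ε < Metric.diam S → 0 < setModulus S ε) ∧
      ∀ ε : ℝ, 0 < ε → ε < Metric.diam S →
        r * spaceModulus X (ε / r) ≤ setModulus S ε :=
  (strongly_convex_set_is_uniformly_convex_general hr hS).imp_left fun h => h hX
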